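/- arXiv:1207.6785 — 3 statements merged into one kernel-verified Lean document; each statement's English description precedes it below -/
import Mathlib

section
/- Let V be a finite set of at least two points in the Euclidean plane ℝ² and let T be a minimum spanning tree on V. If {A,B} is an edge of T and C ∈ V with C ≠ A and C ≠ B, then C does not lie in the open disk with diameter AB; that is, |C − (A+B)/2| ≥ |A − B|/2. -/
/-!
Removing the edge `AB` from the minimum spanning tree `T` leaves a forest with two components, one
containing `A` and the other `B`. If `C` lies in the component of `A`, then replacing `AB` by `CB`
gives another spanning tree, so minimality of `T` yields `|AB| ≤ |CB|`; symmetrically `|AB| ≤ |CA|`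
if `C` lies in the component of `B` (`IsMST.dist_le_of_reachable`). With `M` the midpoint of `AB`,
the triangle inequality `|CB| ≤ |CM| + |MB| = |CM| + |AB| / 2` then gives `|AB| / 2 ≤ |CM|`.
-/

/-- Total Euclidean length of the edges of a graph `G` whose vertices are
mapped to the Euclidean plane (identified with `ℂ`) by `f`. -/
noncomputable def graphLength {V : Type*} [Fintype V] (f : V → ℂ) (G : SimpleGraph V) : ℝ := by
  classical
  exact (∑ p : V × V, if G.Adj p.1 p.2 then dist (f p.1) (f p.2) else 0) / 2

/-- `T` is a minimum spanning tree on the finite point set `V` of the Euclidean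
plane (identified with `ℂ`). -/
def IsMST (V : Finset ℂ) (T : SimpleGraph {x // x ∈ V}) : Prop :=
  T.IsTree ∧ ∀ G : SimpleGraph {x // x ∈ V}, G.IsTree →
    graphLength Subtype.val T ≤ graphLength Subtype.val G

section

open SimpleGraph

/-- After deletion of the edge `ab` of a connected graph, every vertex is still connected to an
endpoint of that edge. -/
lemma reachable_deleteEdges_or {V : Type*} {T : SimpleGraph V} (hT : T.Connected) (a b v : V) :
    (T.deleteEdges {s(a, b)}).Reachable a v ∨ (T.deleteEdges {s(a, b)}).Reachable b v := by
  have key : ∀ x y (_ : T.Walk x y),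
      ((T.deleteEdges {s(a, b)}).Reachable a x ∨ (T.deleteEdges {s(a, b)}).Reachable b x) →
      ((T.deleteEdges {s(a, b)}).Reachable a y ∨ (T.deleteEdges {s(a, b)}).Reachable b y) := by
    intro x y p
    induction p with
    | nil => exact id
    | @cons u w z huw _ ih =>
      intro h
      apply ih
      by_cases he : s(u, w) = s(a, b)
      · rcases Sym2.eq_iff.mp he with ⟨_, rfl⟩ | ⟨_, rfl⟩
        · exact Or.inr (Reachable.refl _)
        · exact Or.inl (Reachable.refl _)
      · have hadj : (T.deleteEdges {s(a, b)}).Adj u w := by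
          rw [deleteEdges_adj]
          exact ⟨huw, he⟩
        exact h.imp (fun r => r.trans hadj.reachable) (fun r => r.trans hadj.reachable)
  obtain ⟨p⟩ := hT.preconnected a v
  exact key a v p (Or.inl (Reachable.refl _))

/-- Edge exchange: if `c` stays connected to `a` after deletion of the tree edge `ab`, then `cb` can
take the place of `ab`. -/
lemma isTree_exchange {V : Type*} {T : SimpleGraph V} (hT : T.IsTree) {a b c : V}
    (hab : T.Adj a b) (hac : (T.deleteEdges {s(a, b)}).Reachable a c) :
    (T.deleteEdges {s(a, b)} ⊔ edge c b).IsTree := by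
  have hbridge : ¬ (T.deleteEdges {s(a, b)}).Reachable a b :=
    isBridge_iff.mp (isAcyclic_iff_forall_adj_isBridge.mp hT.isAcyclic hab)
  have hcb : ¬ (T.deleteEdges {s(a, b)}).Reachable c b := fun h => hbridge (hac.trans h)
  have hne : c ≠ b := by
    rintro rfl
    exact hcb (Reachable.refl _)
  refine ⟨?_, (hT.isAcyclic.anti (deleteEdges_le _)).sup_edge_of_not_reachable hcb⟩
  have hle : T.deleteEdges {s(a, b)} ≤ T.deleteEdges {s(a, b)} ⊔ edge c b := le_sup_left
  have hedge : (T.deleteEdges {s(a, b)} ⊔ edge c b).Adj c b := by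
    simp [edge_adj, hne]
  have hall : ∀ v, (T.deleteEdges {s(a, b)} ⊔ edge c b).Reachable a v := by
    intro v
    rcases reachable_deleteEdges_or hT.connected a b v with h | h
    · exact h.mono hle
    · exact ((hac.mono hle).trans hedge.reachable).trans (h.mono hle)
  have : Nonempty V := ⟨a⟩
  exact Connected.mk fun u v => (hall u).symm.trans (hall v)

end

lemma graphLength_exchange_le {V : Type*} [Fintype V] (f : V → ℂ) {T : SimpleGraph V} {a b c : V}
    (hab : T.Adj a b) :
    graphLength f (T.deleteEdges {s(a, b)} ⊔ SimpleGraph.edge c b) + dist (f a) (f b) ≤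
      graphLength f T + dist (f c) (f b) := by
  classical
  -- `graphLength` sums over ordered pairs, so each of the two edges is counted in both orders.
  have hsum : ∑ p : V × V, ((if (T.deleteEdges {s(a, b)} ⊔ SimpleGraph.edge c b).Adj p.1 p.2
        then dist (f p.1) (f p.2) else 0)
      + (if p = (a, b) then dist (f a) (f b) else 0)
      + (if p = (b, a) then dist (f a) (f b) else 0)) ≤
      ∑ p : V × V, ((if T.Adj p.1 p.2 then dist (f p.1) (f p.2) else 0)
      + (if p = (c, b) then dist (f c) (f b) else 0)
      + (if p = (b, c) then dist (f c) (f b) else 0)) := by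
    refine Finset.sum_le_sum ?_
    rintro ⟨x, y⟩ -
    have hne := hab.ne
    have hsymm := hab.symm
    have hd : 0 ≤ dist (f x) (f y) := dist_nonneg
    have hd' : 0 ≤ dist (f c) (f b) := dist_nonneg
    have h1 := dist_comm (f a) (f b)
    have h2 := dist_comm (f c) (f b)
    simp only [SimpleGraph.sup_adj, SimpleGraph.deleteEdges_adj, SimpleGraph.edge_adj,
      Set.mem_singleton_iff, Sym2.eq_iff, Prod.mk.injEq]
    grind
  simp only [Finset.sum_add_distrib, Finset.sum_ite_eq', Finset.mem_univ, if_true] at hsum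
  -- The definition uses classical decidability of adjacency; the value does not depend on it.
  have hlen : ∀ (G : SimpleGraph V) [DecidableRel G.Adj], graphLength f G =
      (∑ p : V × V, if G.Adj p.1 p.2 then dist (f p.1) (f p.2) else 0) / 2 := by
    intro G _
    unfold graphLength
    congr!
  rw [hlen, hlen]
  linarith

lemma IsMST.dist_le_of_reachable {V : Finset ℂ} {T : SimpleGraph {x // x ∈ V}} (hT : IsMST V T)
    {a b c : {x // x ∈ V}} (hab : T.Adj a b)
    (hac : (T.deleteEdges {s(a, b)}).Reachable a c) :
    dist (a : ℂ) (b : ℂ) ≤ dist (c : ℂ) (b : ℂ) := by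
  have h1 := hT.2 _ (isTree_exchange hT.1 hab hac)
  have h2 := graphLength_exchange_le (c := c) Subtype.val hab
  linarith

theorem mst_vertex_not_in_diameter_disk (V : Finset ℂ) (hV : 2 ≤ V.card)
    (T : SimpleGraph {x // x ∈ V}) (hT : IsMST V T)
    (A B C : {x // x ∈ V}) (hAB : T.Adj A B) (hCA : C ≠ A) (hCB : C ≠ B) :
    dist (A : ℂ) (B : ℂ) / 2 ≤ dist (C : ℂ) (((A : ℂ) + (B : ℂ)) / 2) := by
  have hA : dist (((A : ℂ) + (B : ℂ)) / 2) (A : ℂ) = dist (A : ℂ) (B : ℂ) / 2 := by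
    rw [Complex.dist_eq, Complex.dist_eq, ← norm_neg,
      show -(((A : ℂ) + B) / 2 - A) = ((A : ℂ) - B) / 2 by ring]
    simp
  have hB : dist (((A : ℂ) + (B : ℂ)) / 2) (B : ℂ) = dist (A : ℂ) (B : ℂ) / 2 := by
    rw [Complex.dist_eq, Complex.dist_eq,
      show ((A : ℂ) + B) / 2 - B = ((A : ℂ) - B) / 2 by ring]
    simp
  rcases reachable_deleteEdges_or hT.1.connected A B C with h | h
  · have h1 := hT.dist_le_of_reachable hAB h
    have h2 := dist_triangle (C : ℂ) (((A : ℂ) + (B : ℂ)) / 2) (B : ℂ)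
    linarith
  · rw [Sym2.eq_swap] at h
    have h1 := hT.dist_le_of_reachable hAB.symm h
    have h2 := dist_triangle (C : ℂ) (((A : ℂ) + (B : ℂ)) / 2) (A : ℂ)
    rw [dist_comm (B : ℂ) (A : ℂ)] at h1
    linarith
end

section
/- There exist real numbers ε > 0 and δ > 0 such that for every finite set A ⊆ W_δ = {z ∈ ℂ : Re z > 0 and |Im z| < δ·Re z} with |A| ≥ 2 the following hold. (i) For all x₁, y₁, x₂, y₂ ∈ A, writing l₁ = y₁/x₁ and l₂ = y₂/x₂, the point (y₁ + y₂)/(x₁ + x₂) lies in the set M_{(l₁,l₂)} = {l₁ + (l₂ − l₁)·w : w ∈ M_ε}. (ii) For every subset L ⊆ A : A with |L| ≥ 2 and every minimum spanning tree T on L (where ℂ is identified with the Euclidean plane ℝ²), the sets M_{(l₁,l₂)}, as {l₁, l₂} ranges over the edges of T, are pairwise disjoint. -/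
/-!
Take `ε = 1/2` and `δ = 1/5`. Part (i) is the identity
`(y₁ + y₂)/(x₁ + x₂) = l₁ + (l₂ - l₁) · u/(1 + u)` with `u = x₂/x₁`, together with the fact that
ratios of elements of `W_{1/5}` lie in `W_{1/2}`.

For part (ii), a point `p` lies in `M_{(a,b)}` exactly when `(p - a)/(b - p) ∈ W_ε`, so the angle
`apb` is close to `π`: its cosine is at most `-7/8` (`inner_of_mem_Mset`). Suppose `p` lies in the
sets of two distinct edges `ab` and `cd` of the minimum spanning tree. Up to swapping endpoints,
`c, d` are joined to `b` once `ab` is removed, and `a, b` are joined to `c` once `cd` is removed.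
Exchanging edges (`dist_le_of_isMST`) gives
`|ab| ≤ |ac|`, `|ab| ≤ |ad|`, `|cd| ≤ |ad|`, `|cd| ≤ |bd|`.

These four inequalities are contradictory (`no_common_point`). Expanding around `p`, the first
(if `|pc| ≤ |pb|`) or the last (if `|pb| ≤ |pc|`) forces `cos apc ≤ -7/8` or `cos bpd ≤ -7/8`.
Two successive nearly opposite pairs of directions then make the directions of `a` and `d` from `p`
nearly equal, with cosine at least `1/2`, and so `|ad|` is shorter than `|ab|` or `|cd|`.
-/

open scoped Pointwise Classical

/-- The open wedge `W_ε = {z : Re z > 0, |Im z| < ε · Re z}`. -/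
def wedge (ε : ℝ) : Set ℂ := {z : ℂ | 0 < z.re ∧ |z.im| < ε * z.re}

/-- The meniscus `M_ε`, the image of the wedge under the Möbius map `z ↦ z/(1+z)`. -/
def meniscus (ε : ℝ) : Set ℂ := (fun u : ℂ => u / (1 + u)) '' wedge ε

/-- The set `M_{(l₁,l₂)} = l₁ + (l₂ - l₁)·M_ε`. -/
def Mset (ε : ℝ) (l₁ l₂ : ℂ) : Set ℂ := {z : ℂ | ∃ w ∈ meniscus ε, z = l₁ + (l₂ - l₁) * w}

open scoped InnerProductSpace

/-! ### Geometry around a common point -/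

/-- If `x, y` and `y, z` are nearly opposite pairs of unit vectors, then `x` and `z` are within
`60°` of each other. -/
lemma half_le_inner_of_opposite {x y z : ℂ} (hx : ‖x‖ = 1) (hy : ‖y‖ = 1) (hz : ‖z‖ = 1)
    (hxy : ⟪x, y⟫_ℝ ≤ -(7 / 8)) (hyz : ⟪y, z⟫_ℝ ≤ -(7 / 8)) : 1 / 2 ≤ ⟪x, z⟫_ℝ := by
  -- Expand `0 ≤ ‖x + 2 • y + z‖ ^ 2`, which is the parallelogram bound for
  -- `x - z = (x + y) - (y + z)`.
  have h := real_inner_self_nonneg (x := x + y + (y + z))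
  have hxx : ⟪x, x⟫_ℝ = 1 := by rw [real_inner_self_eq_norm_sq, hx]; norm_num
  have hyy : ⟪y, y⟫_ℝ = 1 := by rw [real_inner_self_eq_norm_sq, hy]; norm_num
  have hzz : ⟪z, z⟫_ℝ = 1 := by rw [real_inner_self_eq_norm_sq, hz]; norm_num
  simp only [inner_add_left, inner_add_right] at h
  rw [real_inner_comm x y, real_inner_comm x z, real_inner_comm y z] at h
  linarith

lemma dist_sq_smul {x y : ℂ} (hx : ‖x‖ = 1) (hy : ‖y‖ = 1) (r s : ℝ) :
    ‖r • x - s • y‖ ^ 2 = r ^ 2 + s ^ 2 - 2 * r * s * ⟪x, y⟫_ℝ := by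
  rw [norm_sub_sq_real, norm_smul, norm_smul, hx, hy, real_inner_smul_left, real_inner_smul_right]
  simp only [Real.norm_eq_abs, mul_one, sq_abs]
  ring

/-- The four exchange inequalities are incompatible with the segments from `p` to `a, b` and from
`p` to `c, d` both forming nearly straight angles. Points are given in polar form around `p`. -/
lemma no_common_point_polar {a b c d : ℂ} {α β γ δ : ℝ}
    (ha : ‖a‖ = 1) (hb : ‖b‖ = 1) (hc : ‖c‖ = 1) (hd : ‖d‖ = 1)
    (hα : 0 < α) (hβ : 0 < β) (hγ : 0 < γ) (hδ : 0 < δ)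
    (hab : ⟪a, b⟫_ℝ ≤ -(7 / 8)) (hcd : ⟪c, d⟫_ℝ ≤ -(7 / 8))
    (h1 : ‖α • a - β • b‖ ≤ ‖α • a - γ • c‖) (h2 : ‖α • a - β • b‖ ≤ ‖α • a - δ • d‖)
    (h3 : ‖γ • c - δ • d‖ ≤ ‖α • a - δ • d‖) (h4 : ‖γ • c - δ • d‖ ≤ ‖β • b - δ • d‖) :
    False := by
  have e1 := pow_le_pow_left₀ (norm_nonneg _) h1 2
  have e2 := pow_le_pow_left₀ (norm_nonneg _) h2 2
  have e3 := pow_le_pow_left₀ (norm_nonneg _) h3 2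
  have e4 := pow_le_pow_left₀ (norm_nonneg _) h4 2
  rw [dist_sq_smul ha hb, dist_sq_smul ha hc] at e1
  rw [dist_sq_smul ha hb, dist_sq_smul ha hd] at e2
  rw [dist_sq_smul hc hd, dist_sq_smul ha hd] at e3
  rw [dist_sq_smul hc hd, dist_sq_smul hb hd] at e4
  have kab : 7 / 8 * (α * β) ≤ -(α * β * ⟪a, b⟫_ℝ) := by nlinarith [mul_pos hα hβ]
  have kcd : 7 / 8 * (γ * δ) ≤ -(γ * δ * ⟪c, d⟫_ℝ) := by nlinarith [mul_pos hγ hδ]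
  have key : 1 / 2 ≤ ⟪a, d⟫_ℝ := by
    rcases le_total γ β with h | h
    · have hac : ⟪a, c⟫_ℝ ≤ -(7 / 8) := by
        have : α * γ * ⟪a, c⟫_ℝ ≤ α * γ * (-(7 / 8)) := by
          nlinarith [mul_le_mul_of_nonneg_left h hα.le]
        exact le_of_mul_le_mul_left this (mul_pos hα hγ)
      exact half_le_inner_of_opposite ha hc hd hac hcd
    · have hbd : ⟪b, d⟫_ℝ ≤ -(7 / 8) := by
        have : β * δ * ⟪b, d⟫_ℝ ≤ β * δ * (-(7 / 8)) := by
          nlinarith [mul_le_mul_of_nonneg_right h hδ.le]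
        exact le_of_mul_le_mul_left this (mul_pos hβ hδ)
      exact half_le_inner_of_opposite ha hb hd hab hbd
  have kad : α * δ * (1 / 2) ≤ α * δ * ⟪a, d⟫_ℝ :=
    mul_le_mul_of_nonneg_left key (mul_pos hα hδ).le
  rcases le_total δ α with h | h
  · nlinarith [mul_le_mul_of_nonneg_right h hδ.le, mul_pos hα hβ, sq_nonneg β]
  · nlinarith [mul_le_mul_of_nonneg_left h hα.le, mul_pos hγ hδ, sq_nonneg γ]

/-- `p` sees `a` and `b` in nearly opposite directions: it differs from both, and the cosine of the
angle `apb` is at most `-7/8`. -/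
def NearlyBetween (p a b : ℂ) : Prop :=
  a - p ≠ 0 ∧ b - p ≠ 0 ∧ ⟪a - p, b - p⟫_ℝ ≤ -(7 / 8) * (‖a - p‖ * ‖b - p‖)

lemma NearlyBetween.symm {p a b : ℂ} (h : NearlyBetween p a b) : NearlyBetween p b a := by
  refine ⟨h.2.1, h.1, ?_⟩
  rw [real_inner_comm, mul_comm ‖b - p‖]
  exact h.2.2

lemma no_common_point {p a b c d : ℂ} (hab : NearlyBetween p a b) (hcd : NearlyBetween p c d)
    (h1 : dist a b ≤ dist a c) (h2 : dist a b ≤ dist a d)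
    (h3 : dist c d ≤ dist a d) (h4 : dist c d ≤ dist b d) : False := by
  have unit : ∀ {v : ℂ}, v ≠ 0 → ‖(‖v‖⁻¹ : ℝ) • v‖ = 1 := fun {v} hv => by
    rw [norm_smul, norm_inv, norm_norm, inv_mul_cancel₀ (norm_ne_zero_iff.2 hv)]
  have polar : ∀ {v : ℂ}, v ≠ 0 → ‖v‖ • (‖v‖⁻¹ : ℝ) • v = v := fun {v} hv => by
    rw [smul_smul, mul_inv_cancel₀ (norm_ne_zero_iff.2 hv), one_smul]
  have cosine : ∀ {v w : ℂ}, v ≠ 0 → w ≠ 0 → ⟪v, w⟫_ℝ ≤ -(7 / 8) * (‖v‖ * ‖w‖) →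
      ⟪(‖v‖⁻¹ : ℝ) • v, (‖w‖⁻¹ : ℝ) • w⟫_ℝ ≤ -(7 / 8) := fun {v w} hv hw h => by
    have hv' := norm_pos_iff.2 hv
    have hw' := norm_pos_iff.2 hw
    rw [real_inner_smul_left, real_inner_smul_right, ← mul_assoc, ← mul_inv,
      inv_mul_le_iff₀ (mul_pos hv' hw')]
    linarith
  obtain ⟨ha, hb, hab⟩ := hab
  obtain ⟨hc, hd, hcd⟩ := hcd
  have tr : ∀ x y : ℂ, dist x y = ‖(x - p) - (y - p)‖ := fun x y => by
    rw [dist_eq_norm, sub_sub_sub_cancel_right]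
  simp only [tr] at h1 h2 h3 h4
  apply no_common_point_polar (unit ha) (unit hb) (unit hc) (unit hd) (norm_pos_iff.2 ha)
    (norm_pos_iff.2 hb) (norm_pos_iff.2 hc) (norm_pos_iff.2 hd) (cosine ha hb hab)
    (cosine hc hd hcd) <;> simp only [polar ha, polar hb, polar hc, polar hd] <;> assumption

lemma inner_of_mem_Mset {a b p : ℂ} (hab : a ≠ b) (hp : p ∈ Mset (1 / 2) a b) :
    NearlyBetween p a b := by
  obtain ⟨_, ⟨u, ⟨hu0, hu⟩, rfl⟩, rfl⟩ := hp
  have h1u : 1 + u ≠ 0 := fun h => by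
    have := congrArg Complex.re h
    simp at this
    linarith
  have hu' : u ≠ 0 := fun h => by simp [h] at hu0
  have hba : b - a ≠ 0 := sub_ne_zero.2 hab.symm
  set q : ℂ := (b - a) / (1 + u) with hq
  have hq0 : q ≠ 0 := div_ne_zero hba h1u
  have e1 : a - (a + (b - a) * (u / (1 + u))) = -(u * q) := by rw [hq]; ring
  have e2 : b - (a + (b - a) * (u / (1 + u))) = q := by rw [hq]; field_simp; ring
  have hre : 7 / 8 * ‖u‖ ≤ u.re := by
    refine abs_le_of_sq_le_sq' ?_ hu0.le |>.2
    rw [mul_pow, ← Complex.normSq_eq_norm_sq, Complex.normSq_apply]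
    have := abs_lt.1 hu
    nlinarith
  simp only [NearlyBetween, e1, e2]
  refine ⟨neg_ne_zero.2 (mul_ne_zero hu' hq0), hq0, ?_⟩
  have hin : ⟪u * q, q⟫_ℝ = u.re * ‖q‖ ^ 2 := by
    rw [Complex.inner, ← Complex.normSq_eq_norm_sq, Complex.normSq_apply]
    simp
    ring
  rw [inner_neg_left, hin, norm_neg, norm_mul]
  nlinarith [mul_le_mul_of_nonneg_right hre (sq_nonneg ‖q‖)]

/-! ### The exchange property of minimum spanning trees -/

section Exchange

variable {V : Type*}

lemma reachable_deleteEdge_or {T : SimpleGraph V} {a b v w : V} (p : T.Walk v w)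
    (hw : w = a) :
    (T.deleteEdges {s(a, b)}).Reachable v a ∨ (T.deleteEdges {s(a, b)}).Reachable v b := by
  induction p with
  | nil => subst hw; exact Or.inl .rfl
  | @cons x y z h p ih =>
    by_cases he : s(x, y) = s(a, b)
    · rcases Sym2.eq_iff.1 he with ⟨rfl, -⟩ | ⟨rfl, -⟩
      · exact Or.inl .rfl
      · exact Or.inr .rfl
    · have hadj : (T.deleteEdges {s(a, b)}).Adj x y := by
        rw [SimpleGraph.deleteEdges_adj]
        exact ⟨h, he⟩
      exact (ih hw).imp hadj.reachable.trans hadj.reachable.trans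

lemma connected_exchange {T : SimpleGraph V} (hT : T.Connected) {a b x y : V}
    (hxy : x ≠ y) (hx : (T.deleteEdges {s(a, b)}).Reachable x a)
    (hy : (T.deleteEdges {s(a, b)}).Reachable y b) :
    (T.deleteEdges {s(a, b)} ⊔ SimpleGraph.edge x y).Connected := by
  have le : T.deleteEdges {s(a, b)} ≤ T.deleteEdges {s(a, b)} ⊔ SimpleGraph.edge x y := le_sup_left
  have hadj : (T.deleteEdges {s(a, b)} ⊔ SimpleGraph.edge x y).Adj x y :=
    Or.inr (by simp [SimpleGraph.edge_adj, hxy])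
  have hab : (T.deleteEdges {s(a, b)} ⊔ SimpleGraph.edge x y).Reachable b a :=
    (hy.mono le).symm.trans (hadj.reachable.symm.trans (hx.mono le))
  have all : ∀ v, (T.deleteEdges {s(a, b)} ⊔ SimpleGraph.edge x y).Reachable v a := fun v => by
    obtain ⟨p⟩ := hT.preconnected v a
    rcases reachable_deleteEdge_or (b := b) p rfl with h | h
    · exact h.mono le
    · exact (h.mono le).trans hab
  have := hT.nonempty
  exact ⟨fun v w => (all v).trans (all w).symm⟩

variable [Fintype V]

lemma graphLength_eq (f : V → ℂ) (G : SimpleGraph V) [h : ∀ p : V × V, Decidable (G.Adj p.1 p.2)] :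
    graphLength f G = (∑ p : V × V, if G.Adj p.1 p.2 then dist (f p.1) (f p.2) else 0) / 2 := by
  unfold graphLength
  congr!

lemma graphLength_mono (f : V → ℂ) {G H : SimpleGraph V} (h : G ≤ H) :
    graphLength f G ≤ graphLength f H := by
  unfold graphLength
  gcongr with p
  split_ifs with h1 h2
  · rfl
  · exact absurd (h h1) h2
  · exact dist_nonneg
  · rfl

lemma graphLength_deleteEdge (f : V → ℂ) {T : SimpleGraph V} {a b : V} (hab : T.Adj a b) :
    graphLength f (T.deleteEdges {s(a, b)}) + dist (f a) (f b) ≤ graphLength f T := by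
  have key : (∑ p : V × V, if (T.deleteEdges {s(a, b)}).Adj p.1 p.2
        then dist (f p.1) (f p.2) else 0)
      + (∑ p : V × V, if p = (a, b) then dist (f a) (f b) else 0)
      + (∑ p : V × V, if p = (b, a) then dist (f a) (f b) else 0)
      ≤ ∑ p : V × V, if T.Adj p.1 p.2 then dist (f p.1) (f p.2) else 0 := by
    rw [← Finset.sum_add_distrib, ← Finset.sum_add_distrib]
    refine Finset.sum_le_sum fun p _ => ?_
    obtain ⟨x, y⟩ := p
    have hne := hab.ne
    by_cases h1 : x = a ∧ y = b
    · obtain ⟨rfl, rfl⟩ := h1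
      simp [hab, hne, hne.symm]
    · by_cases h2 : x = b ∧ y = a
      · obtain ⟨rfl, rfl⟩ := h2
        simp [hab.symm, hne, hne.symm, dist_comm, Sym2.eq_swap]
      · simp [h1, h2, SimpleGraph.deleteEdges_adj]
  rw [Finset.sum_ite_eq' , Finset.sum_ite_eq'] at key
  simp only [Finset.mem_univ, if_true] at key
  rw [graphLength_eq f T, graphLength_eq f (T.deleteEdges {s(a, b)})]
  linarith

lemma graphLength_sup_edge (f : V → ℂ) (G : SimpleGraph V) (x y : V) :
    graphLength f (G ⊔ SimpleGraph.edge x y) ≤ graphLength f G + dist (f x) (f y) := by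
  have key : (∑ p : V × V, if (G ⊔ SimpleGraph.edge x y).Adj p.1 p.2
        then dist (f p.1) (f p.2) else 0)
      ≤ (∑ p : V × V, if G.Adj p.1 p.2 then dist (f p.1) (f p.2) else 0)
      + (∑ p : V × V, if p = (x, y) then dist (f x) (f y) else 0)
      + (∑ p : V × V, if p = (y, x) then dist (f x) (f y) else 0) := by
    rw [← Finset.sum_add_distrib, ← Finset.sum_add_distrib]
    refine Finset.sum_le_sum fun p _ => ?_
    obtain ⟨v, w⟩ := p
    have n1 : 0 ≤ (if G.Adj v w then dist (f v) (f w) else 0) := by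
      split_ifs <;> positivity
    have n2 : 0 ≤ (if (v, w) = (x, y) then dist (f x) (f y) else 0) := by
      split_ifs <;> positivity
    have n3 : 0 ≤ (if (v, w) = (y, x) then dist (f x) (f y) else 0) := by
      split_ifs <;> positivity
    by_cases h : (G ⊔ SimpleGraph.edge x y).Adj v w
    · rw [if_pos h]
      rcases h with h | h
      · rw [if_pos h]
        linarith
      · rw [SimpleGraph.edge_adj] at h
        rcases h.1 with ⟨rfl, rfl⟩ | ⟨rfl, rfl⟩
        · rw [if_pos rfl]
          linarith
        · rw [if_pos (rfl : (v, w) = (v, w)), dist_comm (f w) (f v)] at *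
          linarith
    · rw [if_neg h]
      linarith
  rw [Finset.sum_ite_eq' , Finset.sum_ite_eq'] at key
  simp only [Finset.mem_univ, if_true] at key
  rw [graphLength_eq f G, graphLength_eq f (G ⊔ SimpleGraph.edge x y)]
  linarith

end Exchange

/-- Edge exchange: an edge `ab` of a minimum spanning tree is no longer than any `xy` joining the
two parts into which the removal of `ab` splits the tree. -/
lemma dist_le_of_isMST {L : Finset ℂ} {T : SimpleGraph {x // x ∈ L}} (hT : IsMST L T)
    {a b x y : {x // x ∈ L}} (hab : T.Adj a b)
    (hx : (T.deleteEdges {s(a, b)}).Reachable x a)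
    (hy : (T.deleteEdges {s(a, b)}).Reachable y b) :
    dist (a : ℂ) b ≤ dist (x : ℂ) y := by
  have hxy : x ≠ y := by
    rintro rfl
    have hbridge : T.IsBridge s(a, b) :=
      SimpleGraph.isAcyclic_iff_forall_isBridge.1 hT.1.isAcyclic hab
    exact SimpleGraph.isBridge_iff.1 hbridge (hx.symm.trans hy)
  obtain ⟨S, hS, hStree⟩ := (connected_exchange hT.1.connected hxy hx hy).exists_isTree_le
  have h1 := hT.2 S hStree
  have h2 := graphLength_mono (Subtype.val : {x // x ∈ L} → ℂ) hS
  have h3 := graphLength_sup_edge (Subtype.val : {x // x ∈ L} → ℂ)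
    (T.deleteEdges {s(a, b)}) x y
  have h4 := graphLength_deleteEdge (Subtype.val : {x // x ∈ L} → ℂ) hab
  linarith

/-- The contradiction for two edges of the tree, when the endpoints are named so that `b` and `c`
face each other. -/
lemma no_common_point_of_isMST {L : Finset ℂ} {T : SimpleGraph {x // x ∈ L}} (hT : IsMST L T)
    {a b c d : {x // x ∈ L}} (hab : T.Adj a b) (hcd : T.Adj c d) (hne : s(a, b) ≠ s(c, d))
    {p : ℂ} (hpab : NearlyBetween p a b) (hpcd : NearlyBetween p c d)
    (hcb : (T.deleteEdges {s(a, b)}).Reachable c b)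
    (hbc : (T.deleteEdges {s(c, d)}).Reachable b c) : False := by
  have hdc : (T.deleteEdges {s(a, b)}).Adj d c := by
    rw [SimpleGraph.deleteEdges_adj]
    exact ⟨hcd.symm, fun h => hne (by rw [← Set.mem_singleton_iff.1 h, Sym2.eq_swap])⟩
  have hba : (T.deleteEdges {s(c, d)}).Adj a b := by
    rw [SimpleGraph.deleteEdges_adj]
    exact ⟨hab, hne⟩
  refine no_common_point hpab hpcd
    (dist_le_of_isMST hT hab .rfl hcb)
    (dist_le_of_isMST hT hab .rfl (hdc.reachable.trans hcb))
    (dist_le_of_isMST hT hcd (hba.reachable.trans hbc) .rfl)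
    (dist_le_of_isMST hT hcd hbc .rfl)

lemma disjoint_of_isMST {L : Finset ℂ} {T : SimpleGraph {x // x ∈ L}} (hT : IsMST L T)
    {a b c d : {x // x ∈ L}} (hab : T.Adj a b) (hcd : T.Adj c d) (hne : s(a, b) ≠ s(c, d)) :
    Disjoint (Mset (1 / 2) (a : ℂ) b) (Mset (1 / 2) (c : ℂ) d) := by
  rw [Set.disjoint_left]
  intro p hp hp'
  have hpab := inner_of_mem_Mset (Subtype.coe_injective.ne hab.ne) hp
  have hpcd := inner_of_mem_Mset (Subtype.coe_injective.ne hcd.ne) hp'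
  have hba' : (T.deleteEdges {s(c, d)}).Adj a b := by
    rw [SimpleGraph.deleteEdges_adj]
    exact ⟨hab, hne⟩
  have hcd' : (T.deleteEdges {s(a, b)}).Adj c d := by
    rw [SimpleGraph.deleteEdges_adj]
    exact ⟨hcd, hne.symm⟩
  have sab : s(b, a) = s(a, b) := Sym2.eq_swap
  have scd : s(d, c) = s(c, d) := Sym2.eq_swap
  obtain ⟨q⟩ := hT.1.connected.preconnected c a
  obtain ⟨r⟩ := hT.1.connected.preconnected a c
  rcases reachable_deleteEdge_or (b := b) q rfl with h | h <;>
  rcases reachable_deleteEdge_or (b := d) r rfl with k | k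
  · exact no_common_point_of_isMST hT hab.symm hcd (by rwa [sab]) hpab.symm hpcd
      (by rwa [sab]) k
  · exact no_common_point_of_isMST hT hab.symm hcd.symm (by rwa [sab, scd]) hpab.symm hpcd.symm
      (by rw [sab]; exact hcd'.reachable.symm.trans h) (by rwa [scd])
  · exact no_common_point_of_isMST hT hab hcd hne hpab hpcd h (hba'.reachable.symm.trans k)
  · exact no_common_point_of_isMST hT hab hcd.symm (by rwa [scd]) hpab hpcd.symm
      (hcd'.reachable.symm.trans h) (by rw [scd]; exact hba'.reachable.symm.trans k)

/-! ### Ratios of elements of a thin wedge -/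

lemma div_mem_wedge {x y : ℂ} (hx : x ∈ wedge (1 / 5)) (hy : y ∈ wedge (1 / 5)) :
    y / x ∈ wedge (1 / 2) := by
  obtain ⟨hx0, hx⟩ := hx
  obtain ⟨hy0, hy⟩ := hy
  obtain ⟨hx1, hx2⟩ := abs_lt.1 hx
  obtain ⟨hy1, hy2⟩ := abs_lt.1 hy
  have hN : 0 < Complex.normSq x := Complex.normSq_pos.2 fun h => by simp [h] at hx0
  have hp := mul_pos hx0 hy0
  have him : |y.im * x.im| ≤ (1 / 5 * y.re) * (1 / 5 * x.re) := by
    rw [abs_mul]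
    gcongr
  have hi1 : |y.im * x.re| ≤ (1 / 5 * y.re) * x.re := by
    rw [abs_mul, abs_of_pos hx0]
    gcongr
  have hi2 : |y.re * x.im| ≤ y.re * (1 / 5 * x.re) := by
    rw [abs_mul, abs_of_pos hy0]
    gcongr
  have b1 := abs_le.1 him
  have b2 := abs_le.1 hi1
  have b3 := abs_le.1 hi2
  refine ⟨?_, ?_⟩
  · rw [Complex.div_re, ← add_div]
    exact div_pos (by nlinarith) hN
  · rw [Complex.div_re, Complex.div_im, ← add_div, ← sub_div, abs_div, abs_of_pos hN,
      ← mul_div_assoc]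
    gcongr
    rw [abs_lt]
    constructor <;> nlinarith

lemma mediant_mem_Mset {x₁ y₁ x₂ y₂ : ℂ} (hx₁ : x₁ ∈ wedge (1 / 5)) (hx₂ : x₂ ∈ wedge (1 / 5)) :
    (y₁ + y₂) / (x₁ + x₂) ∈ Mset (1 / 2) (y₁ / x₁) (y₂ / x₂) := by
  have h1 : x₁ ≠ 0 := fun h => by simpa [h] using hx₁.1
  have h2 : x₂ ≠ 0 := fun h => by simpa [h] using hx₂.1
  have h3 : x₁ + x₂ ≠ 0 := fun h => by
    have := congrArg Complex.re h
    simp at this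
    linarith [hx₁.1, hx₂.1]
  refine ⟨_, ⟨x₂ / x₁, div_mem_wedge hx₁ hx₂, rfl⟩, ?_⟩
  have h4 : 1 + x₂ / x₁ = (x₁ + x₂) / x₁ := by field_simp
  simp only [h4]
  field_simp
  ring

theorem claim_complex_solymosi :
    ∃ ε δ : ℝ, 0 < ε ∧ 0 < δ ∧
      ∀ A : Finset ℂ, (A : Set ℂ) ⊆ wedge δ → 2 ≤ A.card →
        (∀ x₁ ∈ A, ∀ y₁ ∈ A, ∀ x₂ ∈ A, ∀ y₂ ∈ A,
          (y₁ + y₂) / (x₁ + x₂) ∈ Mset ε (y₁ / x₁) (y₂ / x₂)) ∧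
        (∀ L : Finset ℂ, L ⊆ A / A → 2 ≤ L.card →
          ∀ T : SimpleGraph {x // x ∈ L}, IsMST L T →
          ∀ l₁ l₂ l₁' l₂' : {x // x ∈ L}, T.Adj l₁ l₂ → T.Adj l₁' l₂' →
            s(l₁, l₂) ≠ s(l₁', l₂') →
            Disjoint (Mset ε (l₁ : ℂ) (l₂ : ℂ)) (Mset ε (l₁' : ℂ) (l₂' : ℂ))) := by
  refine ⟨1 / 2, 1 / 5, by norm_num, by norm_num, fun A hA _ => ⟨?_, ?_⟩⟩
  · intro x₁ hx₁ y₁ _ x₂ hx₂ y₂ _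
    exact mediant_mem_Mset (hA hx₁) (hA hx₂)
  · intro L _ _ T hT a b c d hab hcd hne
    exact disjoint_of_isMST hT hab hcd hne
end

section
/- Let A be a finite nonempty set in an abelian group G. For every subset D' ⊆ A − A, one has E(A, A − A) · E₃(A) ≥ |A|² · (Σ_{d ∈ D'} |A_d|^{3/2})². -/
/-!
The proof combines the Katz–Koester inclusion with the Cauchy–Schwarz inequality. For each `d`,
Cauchy–Schwarz over the values of `a - b` gives `|A|² |A_d|² ≤ |A - A_d| E(A, A_d)`. Multiplying
by `|A_d|`, taking square roots and summing over `d ∈ D'`, a second Cauchy–Schwarz gives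
`|A|² (∑ |A_d|^{3/2})² ≤ (∑ |A_d| |A - A_d|) (∑ E(A, A_d))`.

The first factor is at most `E(A, A - A)`, because every `y ∈ A - A_d` satisfies both
`y ∈ A - A` and `y - d ∈ A - A` (`sum_card_mul_card_sub_le_addEnergy`). The second is at most
`E₃(A)`, because a solution of `a₁ - a₂ = b₁ - b₂` with `bᵢ ∈ A_d` gives the third
representation `(b₁ + d) - (b₂ + d)` of the same difference
(`sum_addEnergy_sliceSet_le_cubicEnergy`).
-/

open scoped Pointwise

/-- The additive energy `E(A,B) = #{(a₁,a₂,b₁,b₂) ∈ A×A×B×B : a₁ - a₂ = b₁ - b₂}`. -/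
def addEnergy {G : Type*} [AddCommGroup G] [DecidableEq G] (A B : Finset G) : ℕ :=
  (((A ×ˢ A) ×ˢ B ×ˢ B).filter fun x => x.1.1 - x.1.2 = x.2.1 - x.2.2).card

/-- The cubic energy `E₃(A) = #{(a₁,…,a₆) ∈ A⁶ : a₁ - a₂ = a₃ - a₄ = a₅ - a₆}`. -/
def cubicEnergy {G : Type*} [AddCommGroup G] [DecidableEq G] (A : Finset G) : ℕ :=
  (((A ×ˢ A) ×ˢ (A ×ˢ A) ×ˢ A ×ˢ A).filter fun x =>
    x.1.1 - x.1.2 = x.2.1.1 - x.2.1.2 ∧ x.2.1.1 - x.2.1.2 = x.2.2.1 - x.2.2.2).card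

/-- `A_d = {a ∈ A : a + d ∈ A}`. -/
def sliceSet {G : Type*} [AddCommGroup G] [DecidableEq G] (A : Finset G) (d : G) : Finset G :=
  A.filter fun a => a + d ∈ A

lemma sq_card_mul_sq_card_le {G : Type*} [AddCommGroup G] [DecidableEq G] (A B : Finset G) :
    A.card ^ 2 * B.card ^ 2 ≤ (A - B).card * addEnergy A B := by
  have h := Finset.le_card_add_mul_addEnergy A (-B)
  rw [← sub_eq_add_neg, Finset.card_neg] at h
  refine h.trans (Nat.mul_le_mul_left _ ?_)
  unfold Finset.addEnergy addEnergy
  refine Finset.card_le_card_of_injOn (fun x => (x.1, (-x.2.1, -x.2.2))) ?_ ?_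
  · rintro ⟨⟨a, b⟩, c, d⟩ hx
    simp only [Finset.coe_filter, Finset.mem_product, Set.mem_ofPred_eq, Finset.mem_neg'] at hx ⊢
    refine ⟨hx.1, ?_⟩
    have := hx.2
    rw [← eq_sub_iff_add_eq] at this
    rw [this]
    abel
  · rintro ⟨⟨a, b⟩, c, d⟩ - ⟨⟨a', b'⟩, c', d'⟩ - h
    simpa using h

/-- By the Katz–Koester inclusion, `(d, a, y) ↦ ((a + d, a), (y, y - d))` sends the triples with
`a ∈ A_d`, `y ∈ A - A_d` injectively to quadruples counted by `E(A, A - A)`. -/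
lemma sum_card_mul_card_sub_le_addEnergy {G : Type*} [AddCommGroup G] [DecidableEq G]
    (A D : Finset G) :
    ∑ d ∈ D, (sliceSet A d).card * (A - sliceSet A d).card ≤ addEnergy A (A - A) := by
  simp_rw [← Finset.card_product]
  rw [← Finset.card_sigma]
  refine Finset.card_le_card_of_injOn
    (fun x => ((x.2.1 + x.1, x.2.1), (x.2.2, x.2.2 - x.1))) ?_ ?_
  · rintro ⟨d, a, y⟩ hx
    simp only [Finset.mem_coe, Finset.mem_sigma, Finset.mem_product, sliceSet,
      Finset.mem_filter, Finset.mem_sub] at hx ⊢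
    obtain ⟨-, ⟨ha, had⟩, u, hu, v, ⟨hv, hvd⟩, rfl⟩ := hx
    exact ⟨⟨⟨had, ha⟩, ⟨u, hu, v, hv, rfl⟩, u, hu, v + d, hvd, by abel⟩, by abel⟩
  · rintro ⟨d, a, y⟩ - ⟨d', a', y'⟩ - h
    simp only [Prod.mk.injEq] at h
    obtain ⟨⟨h1, rfl⟩, rfl, -⟩ := h
    obtain rfl := add_left_cancel h1
    rfl

/-- A pair of representations `a₁ - a₂ = b₁ - b₂` with `b₁, b₂ ∈ A_d` extends to a triple by
`(b₁ + d) - (b₂ + d)`, and `d` can be recovered from the triple. -/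
lemma sum_addEnergy_sliceSet_le_cubicEnergy {G : Type*} [AddCommGroup G] [DecidableEq G]
    (A D : Finset G) :
    ∑ d ∈ D, addEnergy A (sliceSet A d) ≤ cubicEnergy A := by
  unfold addEnergy
  rw [← Finset.card_sigma]
  refine Finset.card_le_card_of_injOn
    (fun x => (x.2.1, (x.2.2, (x.2.2.1 + x.1, x.2.2.2 + x.1)))) ?_ ?_
  · rintro ⟨d, ⟨a, b⟩, u, v⟩ hx
    simp only [Finset.mem_coe, Finset.mem_sigma, Finset.mem_product, sliceSet,
      Finset.mem_filter] at hx ⊢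
    obtain ⟨-, ⟨⟨ha, hb⟩, ⟨hu, hud⟩, hv, hvd⟩, h⟩ := hx
    exact ⟨⟨⟨ha, hb⟩, ⟨hu, hv⟩, hud, hvd⟩, h, by abel⟩
  · rintro ⟨d, ⟨a, b⟩, u, v⟩ - ⟨d', ⟨a', b'⟩, u', v'⟩ - h
    simp only [Prod.mk.injEq] at h
    obtain ⟨⟨rfl, rfl⟩, ⟨rfl, rfl⟩, h1, -⟩ := h
    obtain rfl := add_left_cancel h1
    rfl

theorem energy_cubicEnergy_lower_bound {G : Type*} [AddCommGroup G] [DecidableEq G]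
    (A : Finset G) (hA : A.Nonempty) (D' : Finset G) (hD' : D' ⊆ A - A) :
    (A.card : ℝ) ^ 2 * (∑ d ∈ D', ((sliceSet A d).card : ℝ) ^ ((3 : ℝ) / 2)) ^ 2 ≤
      (addEnergy A (A - A) : ℝ) * (cubicEnergy A : ℝ) := by
  have h1 : ∑ d ∈ D', ((sliceSet A d).card : ℝ) * ((A - sliceSet A d).card : ℝ) ≤
      (addEnergy A (A - A) : ℝ) := by
    exact_mod_cast sum_card_mul_card_sub_le_addEnergy A D'
  have h2 : ∑ d ∈ D', (addEnergy A (sliceSet A d) : ℝ) ≤ (cubicEnergy A : ℝ) := by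
    exact_mod_cast sum_addEnergy_sliceSet_le_cubicEnergy A D'
  refine le_trans ?_ (mul_le_mul h1 h2
    (Finset.sum_nonneg fun _ _ => Nat.cast_nonneg _) (Nat.cast_nonneg _))
  rw [← mul_pow, Finset.mul_sum]
  refine Finset.sum_sq_le_sum_mul_sum_of_sq_le_mul D'
    (fun _ _ => mul_nonneg (Nat.cast_nonneg _) (Nat.cast_nonneg _))
    (fun _ _ => Nat.cast_nonneg _) fun d _ => ?_
  have h3 : (A.card : ℝ) ^ 2 * ((sliceSet A d).card : ℝ) ^ 2 ≤
      ((A - sliceSet A d).card : ℝ) * (addEnergy A (sliceSet A d) : ℝ) := by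
    exact_mod_cast sq_card_mul_sq_card_le A (sliceSet A d)
  have h4 : (((sliceSet A d).card : ℝ) ^ ((3 : ℝ) / 2)) ^ 2 = ((sliceSet A d).card : ℝ) ^ 3 := by
    rw [← Real.rpow_natCast, ← Real.rpow_mul (Nat.cast_nonneg _), ← Real.rpow_natCast]
    norm_num
  rw [mul_pow, h4]
  have h5 := mul_le_mul_of_nonneg_left h3 (Nat.cast_nonneg (α := ℝ) (sliceSet A d).card)
  linarith
end
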